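/- There exist constants c, C, δ > 0 and an integer N such that for all integers n ≥ N and all integers m with 2 ≤ m ≤ δ·log n, writing u = n/m, one has c·u·n^{−1/m} ≤ log p_{n,m} − u·(1 − log n) ≤ C·u·n^{−1/m}. -/

import Mathlib

open Real

noncomputable section

/-- Predicate characterizing the Dickman function `ρ : [0,∞) → (0,∞)`:
continuous on `[0,∞)`, positive, equal to `1` on `[0,1]`, and satisfying the
delay differential equation `t·ρ'(t) + ρ(t-1) = 0` for `t > 1`. -/
def IsDickman (ρ : ℝ → ℝ) : Prop :=
  ContinuousOn ρ (Set.Ici 0) ∧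
  (∀ t : ℝ, 0 ≤ t → 0 < ρ t) ∧
  (∀ t ∈ Set.Icc (0:ℝ) 1, ρ t = 1) ∧
  (∀ t : ℝ, 1 < t → HasDerivAt ρ (-(ρ (t - 1)) / t) t)

/-- `ξ(u)`: for `u > 1`, the unique positive solution of `e^ξ = 1 + u·ξ`; otherwise `0`. -/
def xi (u : ℝ) : ℝ :=
  open Classical in
  if h : ∃ x : ℝ, 0 < x ∧ Real.exp x = 1 + u * x then h.choose else 0

/-- `p_{n,m}`: probability that a uniformly random permutation of `{1,…,n}` is `m`-friable,
i.e. has no cycle of length greater than `m`. -/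
def permProb (n m : ℕ) : ℝ :=
  (Nat.card {σ : Equiv.Perm (Fin n) // ∀ c ∈ σ.cycleType, c ≤ m} : ℝ) /
    (Nat.factorial n : ℝ)

/-- `p_{n,m,q}`: proportion of monic polynomials of degree `n` over a finite field `F`
(of cardinality `q`) that are `m`-friable, i.e. all of whose monic irreducible factors
have degree at most `m`. -/
def polyProb (F : Type) [Field F] [Fintype F] (n m : ℕ) : ℝ :=
  (Nat.card {f : Polynomial F // f.Monic ∧ f.natDegree = n ∧
      ∀ p : Polynomial F, p.Monic → Irreducible p → p ∣ f → p.natDegree ≤ m} : ℝ) /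
    (Fintype.card F : ℝ) ^ n

/-- `F_q(z) = ∏_{deg P ≤ m} (1 - (z/q)^{deg P})⁻¹`, the product over monic irreducible
polynomials `P` over `F` of degree at most `m`. -/
def FqFun (F : Type) [Field F] [Fintype F] (m : ℕ) (z : ℝ) : ℝ :=
  ∏ᶠ p ∈ {p : Polynomial F | p.Monic ∧ Irreducible p ∧ p.natDegree ≤ m},
    (1 - (z / (Fintype.card F : ℝ)) ^ p.natDegree)⁻¹

/-- `G_q(z) = F_q(z) · exp(-∑_{i=1}^m z^i/i)`. -/
def Gq (F : Type) [Field F] [Fintype F] (m : ℕ) (z : ℝ) : ℝ :=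
  FqFun F m z * Real.exp (-(∑ i ∈ Finset.Icc 1 m, z ^ i / (i : ℝ)))

/-- The coefficients `d_{m,i}`. -/
def dcoef (m i : ℕ) : ℝ :=
  if i = m then -(1 / (m : ℝ)) * ∑ j ∈ Finset.Icc 2 m, (1 : ℝ) / (j : ℝ)
  else Real.Gamma ((i : ℝ) + (i : ℝ) / (m : ℝ)) /
    (((m : ℝ) - (i : ℝ)) * (Nat.factorial i : ℝ) * Real.Gamma (1 + (i : ℝ) / (m : ℝ)))

/-- `T(s) = ∫₀^s ((e^t - 1)/t)·((t/m)/(1 - e^{-t/m}) - 1) dt`, integrand extended by `0` at `t = 0`. -/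
def Tfun (m : ℕ) (s : ℝ) : ℝ :=
  ∫ t in (0:ℝ)..s,
    if t = 0 then 0 else
      ((Real.exp t - 1) / t) * ((t / (m : ℝ)) / (1 - Real.exp (-t / (m : ℝ))) - 1)

end

/-!
Let `z = n ^ (1 / m)`. Weighting each `i`-cycle by `z ^ i` in the cycle index gives
`p_{n,m} z ^ n ≤ exp (∑ i ∈ Icc 1 m, z ^ i / i)`. The term `i = m` is `z ^ m / m = u`, and the
lower terms decay geometrically from `z ^ (m - 1) / (m - 1) ≍ u / z`; this is the upper bound.

For the lower bound it is enough to keep one cycle type, namely `a` cycles of length `m` and `k`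
cycles of length `m - 1`. By Cauchy's formula its probability is at least
`1 / (m ^ (a + k) * a ! * k !)`, and Stirling's formula turns this into the lower bound
`k * (log (u / k) - 1 - log z) - log n - 2` for `log p_{n,m} - u * (1 - log n)`. The choice
`k ≈ exp (-2) * u / z` makes the main term at least `k`. A suitable `a` exists for some `k` within
`m` of this value, and the errors `m` and `log n` are negligible because `z ≤ √n`.
-/

open Finset
open scoped Nat

section CycleIndex

lemma filter_two_le_parts_add_replicate {n : ℕ} (p : n.Partition) :
    p.parts.filter (2 ≤ ·) + Multiset.replicate (p.parts.count 1) 1 = p.parts := by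
  conv_rhs => rw [← Multiset.filter_add_not (2 ≤ ·) p.parts]
  rw [← Multiset.filter_eq']
  congr 1
  refine Multiset.filter_congr fun i hi ↦ ?_
  have : 0 < i := p.parts_pos hi
  lia

lemma sum_filter_two_le_parts_add_count_one {n : ℕ} (p : n.Partition) :
    (p.parts.filter (2 ≤ ·)).sum + p.parts.count 1 = n := by
  simpa [p.parts_sum] using congrArg Multiset.sum (filter_two_le_parts_add_replicate p)

lemma prod_factorial_count_parts {n : ℕ} (p : n.Partition) :
    ∏ i ∈ p.parts.toFinset, (p.parts.count i)! =
      (p.parts.count 1)! * ∏ i ∈ (p.parts.filter (2 ≤ ·)).toFinset,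
        ((p.parts.filter (2 ≤ ·)).count i)! := by
  have hsub : p.parts.toFinset ⊆ insert 1 (p.parts.filter (2 ≤ ·)).toFinset := by
    intro i hi
    have : 0 < i := p.parts_pos (Multiset.mem_toFinset.mp hi)
    have : i = 1 ∨ 2 ≤ i := by lia
    simp_all
  rw [prod_subset hsub (by simp +contextual), prod_insert (by simp)]
  congr 1
  refine prod_congr rfl fun i hi ↦ ?_
  rw [Multiset.count_filter_of_pos (by simp_all)]

variable {α : Type*} [Fintype α] [DecidableEq α]

lemma partition_eq_iff_cycleType_eq (σ : Equiv.Perm α) (p : (Fintype.card α).Partition) :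
    σ.partition = p ↔ σ.cycleType = p.parts.filter (2 ≤ ·) := by
  refine ⟨fun h ↦ h ▸ σ.filter_parts_partition_eq_cycleType.symm, fun h ↦ ?_⟩
  have hfix : Fintype.card α - (p.parts.filter (2 ≤ ·)).sum = p.parts.count 1 :=
    Nat.sub_eq_of_eq_add' (sum_filter_two_le_parts_add_count_one p).symm
  rw [Nat.Partition.ext_iff, Equiv.Perm.parts_partition, ← Equiv.Perm.sum_cycleType, h, hfix,
    filter_two_le_parts_add_replicate]

theorem card_of_partition_mul_eq (p : (Fintype.card α).Partition) :
    #{σ : Equiv.Perm α | σ.partition = p} *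
      (p.parts.prod * ∏ i ∈ p.parts.toFinset, (p.parts.count i)!) = (Fintype.card α)! := by
  set c := p.parts.filter (2 ≤ ·) with hc
  have hsum : c.sum + p.parts.count 1 = Fintype.card α := sum_filter_two_le_parts_add_count_one p
  have hprod : p.parts.prod = c.prod := by
    rw [← filter_two_le_parts_add_replicate p]
    simp [hc]
  have hcard := Equiv.Perm.card_of_cycleType_mul_eq α c
  rw [if_pos ⟨by lia, fun i hi ↦ (Multiset.mem_filter.mp hi).2⟩,
    Nat.sub_eq_of_eq_add' hsum.symm] at hcard
  simp_rw [partition_eq_iff_cycleType_eq, ← hc]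
  rw [← hcard, hprod, prod_factorial_count_parts]
  ring

lemma card_of_partition_mul_prod_map (p : (Fintype.card α).Partition) (w : ℕ → ℝ) {s : Finset ℕ}
    (hs : ∀ i ∈ p.parts, i ∈ s) :
    #{σ : Equiv.Perm α | σ.partition = p} * (p.parts.map w).prod =
      (Fintype.card α)! * ∏ i ∈ s, (w i / i) ^ p.parts.count i / (p.parts.count i)! := by
  have hprod : (p.parts.prod : ℝ) ≠ 0 := by
    exact_mod_cast Multiset.prod_ne_zero fun h ↦ (p.parts_pos h).ne rfl
  have hs' : ∏ i ∈ s, (w i / i) ^ p.parts.count i / ((p.parts.count i)! : ℝ) =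
      ∏ i ∈ p.parts.toFinset, (w i / i) ^ p.parts.count i / ((p.parts.count i)! : ℝ) := by
    refine (prod_subset (fun i hi ↦ hs i (Multiset.mem_toFinset.mp hi)) fun i _ hi ↦ ?_).symm
    simp [Multiset.count_eq_zero.mpr (mt Multiset.mem_toFinset.mpr hi)]
  have hparts_prod : (p.parts.prod : ℝ) = ∏ i ∈ p.parts.toFinset, (i : ℝ) ^ p.parts.count i := by
    rw [prod_multiset_count]
    push_cast
    rfl
  rw [← card_of_partition_mul_eq p, hs', prod_multiset_map_count]
  simp_rw [div_pow, prod_div_distrib, ← hparts_prod]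
  simp only [Nat.cast_mul, Nat.cast_prod]
  field_simp

lemma count_parts_le {n : ℕ} (p : n.Partition) (i : ℕ) : p.parts.count i ≤ n :=
  calc p.parts.count i ≤ p.parts.card := Multiset.count_le_card i p.parts
    _ = p.parts.card • 1 := by simp
    _ ≤ p.parts.sum := Multiset.card_nsmul_le_sum fun _ hi ↦ p.parts_pos hi
    _ = n := p.parts_sum

lemma sum_restricted_prod_count_le {R : Type*} [CommSemiring R] [PartialOrder R]
    [IsOrderedRing R] (n : ℕ) (s : Finset ℕ) {f : ℕ → ℕ → R} (hf : ∀ i k, 0 ≤ f i k) :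
    ∑ p ∈ Nat.Partition.restricted n (· ∈ s), ∏ i ∈ s, f i (p.parts.count i) ≤
      ∏ i ∈ s, ∑ k ∈ range (n + 1), f i k := by
  let counts (p : n.Partition) (i : s) : ℕ := p.parts.count (i : ℕ)
  have hinj : Set.InjOn counts (Nat.Partition.restricted n (· ∈ s) : Set n.Partition) := by
    intro p hp q hq hpq
    simp only [Nat.Partition.restricted, coe_filter, mem_univ, true_and, Set.mem_ofPred_eq] at hp hq
    refine Nat.Partition.ext (Multiset.ext.mpr fun i ↦ ?_)
    by_cases hi : i ∈ s
    · exact congrFun hpq ⟨i, hi⟩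
    · rw [Multiset.count_eq_zero.mpr (mt (hp i) hi), Multiset.count_eq_zero.mpr (mt (hq i) hi)]
  have himage : (Nat.Partition.restricted n (· ∈ s)).image counts ⊆
      Fintype.piFinset fun _ ↦ range (n + 1) := by
    simp only [image_subset_iff, Fintype.mem_piFinset, mem_range, Nat.lt_succ_iff]
    exact fun p _ i ↦ count_parts_le p i
  calc ∑ p ∈ Nat.Partition.restricted n (· ∈ s), ∏ i ∈ s, f i (p.parts.count i)
      = ∑ p ∈ Nat.Partition.restricted n (· ∈ s), ∏ i : s, f i (counts p i) :=
        sum_congr rfl fun p _ ↦ (prod_coe_sort s fun i ↦ f i (p.parts.count i)).symm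
    _ = ∑ c ∈ (Nat.Partition.restricted n (· ∈ s)).image counts, ∏ i : s, f i (c i) := by
        rw [sum_image hinj]
    _ ≤ ∑ c ∈ Fintype.piFinset fun _ : s ↦ range (n + 1), ∏ i : s, f i (c i) :=
        sum_le_sum_of_subset_of_nonneg himage fun c _ _ ↦ prod_nonneg fun i _ ↦ hf i (c i)
    _ = ∏ i ∈ s, ∑ k ∈ range (n + 1), f i k := by
        rw [sum_prod_piFinset, prod_coe_sort s fun i ↦ ∑ k ∈ range (n + 1), f i k]

theorem sum_prod_map_parts_partition_le (s : Finset ℕ) {w : ℕ → ℝ} (hw : ∀ i, 0 ≤ w i) :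
    ∑ σ : Equiv.Perm α with ∀ i ∈ σ.partition.parts, i ∈ s, (σ.partition.parts.map w).prod ≤
      (Fintype.card α)! * exp (∑ i ∈ s, w i / i) := by
  set P := Nat.Partition.restricted (Fintype.card α) (· ∈ s) with hP
  have hfiber (p : (Fintype.card α).Partition) (hp : p ∈ P) :
      ∑ σ : Equiv.Perm α with (∀ i ∈ σ.partition.parts, i ∈ s) ∧ σ.partition = p,
        (σ.partition.parts.map w).prod =
      (Fintype.card α)! * ∏ i ∈ s, (w i / i) ^ p.parts.count i / (p.parts.count i)! := by
    have hps : ∀ i ∈ p.parts, i ∈ s := by simpa [hP, Nat.Partition.restricted] using hp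
    rw [← card_of_partition_mul_prod_map p w hps, ← nsmul_eq_mul, ← sum_const]
    refine sum_congr (filter_congr fun σ _ ↦ and_iff_right_of_imp fun h ↦ h ▸ hps) ?_
    intro σ hσ
    rw [(mem_filter.mp hσ).2]
  calc ∑ σ : Equiv.Perm α with ∀ i ∈ σ.partition.parts, i ∈ s, (σ.partition.parts.map w).prod
      = ∑ p ∈ P, (Fintype.card α)! *
          ∏ i ∈ s, (w i / i) ^ p.parts.count i / (p.parts.count i)! := by
        rw [← sum_fiberwise_of_maps_to (t := P) (g := Equiv.Perm.partition)
          (fun σ hσ ↦ by simpa [hP, Nat.Partition.restricted] using hσ)]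
        simp_rw [filter_filter]
        exact sum_congr rfl hfiber
    _ ≤ (Fintype.card α)! *
          ∏ i ∈ s, ∑ k ∈ range (Fintype.card α + 1), (w i / i) ^ k / (k ! : ℝ) := by
        rw [← mul_sum]
        gcongr
        exact sum_restricted_prod_count_le _ s (f := fun i k ↦ (w i / i) ^ k / (k ! : ℝ))
          fun i k ↦ by have := hw i; positivity
    _ ≤ (Fintype.card α)! * exp (∑ i ∈ s, w i / i) := by
        rw [exp_sum]
        gcongr with i
        · exact fun i _ ↦ sum_nonneg fun k _ ↦ by have := hw i; positivity
        · exact sum_le_exp_of_nonneg (by have := hw i; positivity) _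

end CycleIndex

lemma permProb_eq_card_div {m : ℕ} (hm : 0 < m) (n : ℕ) :
    permProb n m =
      #{σ : Equiv.Perm (Fin n) | ∀ i ∈ σ.partition.parts, i ∈ Icc 1 m} / (n ! : ℝ) := by
  unfold permProb
  rw [Nat.card_eq_fintype_card, Fintype.card_subtype]
  congr 3
  refine filter_congr fun σ _ ↦ ⟨fun h i hi ↦ ?_, fun h i hi ↦ ?_⟩
  · refine mem_Icc.mpr ⟨σ.partition.parts_pos hi, ?_⟩
    rw [Equiv.Perm.parts_partition, Multiset.mem_add] at hi
    rcases hi with hi | hi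
    · exact h i hi
    · exact (Multiset.eq_of_mem_replicate hi).trans_le hm
  · refine (mem_Icc.mp (h i ?_)).2
    rw [Equiv.Perm.parts_partition]
    exact Multiset.mem_add.mpr (.inl hi)

lemma permProb_pos (n m : ℕ) : 0 < permProb n m := by
  have : Nonempty {σ : Equiv.Perm (Fin n) // ∀ c ∈ σ.cycleType, c ≤ m} := ⟨1, by simp⟩
  have : 0 < Nat.card {σ : Equiv.Perm (Fin n) // ∀ c ∈ σ.cycleType, c ≤ m} := Nat.card_pos
  unfold permProb
  positivity

theorem permProb_mul_pow_le_exp {m : ℕ} (hm : 0 < m) (n : ℕ) {z : ℝ} (hz : 0 ≤ z) :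
    permProb n m * z ^ n ≤ exp (∑ i ∈ Icc 1 m, z ^ i / i) := by
  have hle := sum_prod_map_parts_partition_le (α := Fin n) (Icc 1 m) (w := (z ^ ·))
    fun i ↦ pow_nonneg hz i
  have hweight (σ : Equiv.Perm (Fin n)) : (σ.partition.parts.map (z ^ ·)).prod = z ^ n := by
    calc (σ.partition.parts.map (z ^ ·)).prod = z ^ σ.partition.parts.sum := by
          induction σ.partition.parts using Multiset.induction_on <;> simp_all [pow_add]
      _ = z ^ n := by rw [σ.partition.parts_sum, Fintype.card_fin]
  simp_rw [hweight, sum_const, Fintype.card_fin, nsmul_eq_mul] at hle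
  rw [permProb_eq_card_div hm, div_mul_eq_mul_div, div_le_iff₀' (by positivity)]
  exact hle

theorem one_le_permProb_mul_prod_parts {m n : ℕ} (hm : 0 < m) (p : n.Partition)
    (hp : ∀ i ∈ p.parts, i ≤ m) :
    1 ≤ permProb n m * (p.parts.prod * ∏ i ∈ p.parts.toFinset, (p.parts.count i)! : ℕ) := by
  obtain ⟨q, hq⟩ : ∃ q : (Fintype.card (Fin n)).Partition, q.parts = p.parts :=
    ⟨⟨p.parts, p.parts_pos, by simp [p.parts_sum]⟩, rfl⟩
  have hcard := (card_of_partition_mul_eq q).trans (congrArg _ (Fintype.card_fin n))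
  rw [hq] at hcard
  rw [permProb_eq_card_div hm, div_mul_eq_mul_div, one_le_div (by positivity)]
  norm_cast
  rw [← hcard]
  gcongr with σ
  rintro rfl i hi
  rw [hq] at hi
  exact mem_Icc.mpr ⟨p.parts_pos hi, hp i hi⟩

lemma one_le_permProb_mul_factorial_mul_factorial {m n a k : ℕ} (hm : 2 ≤ m)
    (h : m * a + (m - 1) * k = n) :
    1 ≤ permProb n m * (m ^ (a + k) * (a ! * k !)) := by
  set c := Multiset.replicate a m + Multiset.replicate k (m - 1) with hc
  have hmem : ∀ i ∈ c, i = m ∨ i = m - 1 := fun i hi ↦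
    (Multiset.mem_add.mp hi).imp Multiset.eq_of_mem_replicate Multiset.eq_of_mem_replicate
  let p : n.Partition :=
    { parts := c
      parts_pos := fun {i} hi ↦ by have := hmem i hi; lia
      parts_sum := by rw [← h, hc]; simp [mul_comm] }
  refine (one_le_permProb_mul_prod_parts (m := m) (by lia) p fun i hi ↦ ?_).trans ?_
  · have := hmem i hi; lia
  refine mul_le_mul_of_nonneg_left ?_ (permProb_pos n m).le
  norm_cast
  refine Nat.mul_le_mul ?_ ?_
  · calc c.prod = m ^ a * (m - 1) ^ k := by simp [hc]
      _ ≤ m ^ a * m ^ k := by gcongr; lia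
      _ = m ^ (a + k) := (pow_add ..).symm
  · have hsub : c.toFinset ⊆ {m, m - 1} := fun i hi ↦ by
      simpa using hmem i (Multiset.mem_toFinset.mp hi)
    refine (prod_subset hsub (by simp +contextual [p])).trans_le ?_
    rw [prod_pair (by lia)]
    simp [p, c, Multiset.count_replicate, show m - 1 ≠ m by lia, show m ≠ m - 1 by lia]

lemma sum_Icc_pow_div_le {z : ℝ} (hz : 4 ≤ z) (k : ℕ) :
    ∑ i ∈ Icc 1 (k + 1), z ^ i / (i : ℝ) ≤ 2 * (z ^ (k + 1) / ((k + 1 : ℕ) : ℝ)) := by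
  induction k with
  | zero =>
    simp only [zero_add, Icc_self, sum_singleton, pow_one, Nat.cast_one, div_one]
    linarith
  | succ k ih =>
    have hdouble : 2 * (z ^ (k + 1) / ((k + 1 : ℕ) : ℝ)) ≤ z ^ (k + 2) / ((k + 2 : ℕ) : ℝ) := by
      have hk : 2 * ((k : ℝ) + 2) ≤ z * (k + 1) := by nlinarith [(k.cast_nonneg : (0 : ℝ) ≤ k)]
      rw [← mul_div_assoc, div_le_div_iff₀ (by positivity) (by positivity)]
      push_cast
      calc 2 * z ^ (k + 1) * ((k : ℝ) + 2) = z ^ (k + 1) * (2 * (k + 2)) := by ring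
        _ ≤ z ^ (k + 1) * (z * (k + 1)) := by gcongr
        _ = z ^ (k + 2) * (k + 1) := by ring
    rw [sum_Icc_succ_top (by lia)]
    linarith

lemma log_factorial_le (n : ℕ) : log n ! ≤ n * log n - n + log n / 2 + 1 := by
  rcases n with _ | n
  · simp
  have hseq : log (Stirling.stirlingSeq (n + 1)) ≤ log (Stirling.stirlingSeq 1) :=
    Stirling.log_stirlingSeq'_antitone n.zero_le
  have hn : ((n + 1 : ℕ) : ℝ) ≠ 0 := by positivity
  rw [Stirling.log_stirlingSeq_formula, Stirling.stirlingSeq_one,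
    log_div (exp_ne_zero 1) (by positivity), log_exp, log_sqrt zero_le_two,
    log_mul two_ne_zero hn, log_div hn (exp_ne_zero 1), log_exp] at hseq
  linarith

lemma exists_mul_add_pred_mul_eq {m n K : ℕ} (hm : 0 < m) (hmK : m ≤ K) (hK : m * K ≤ n) :
    ∃ a k, m * a + (m - 1) * k = n ∧ K < k + m ∧ k ≤ K := by
  obtain ⟨j, rfl⟩ : ∃ j, m = j + 1 := ⟨m - 1, by lia⟩
  set b := (n + K) / (j + 1)
  have hdiv : (j + 1) * b + (n + K) % (j + 1) = n + K := Nat.div_add_mod _ _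
  have hmod : (n + K) % (j + 1) < j + 1 := Nat.mod_lt _ hm
  have hKb : K ≤ b := by
    rw [Nat.le_div_iff_mul_le hm]
    lia
  obtain ⟨k, hk⟩ := Nat.exists_eq_add_of_le (show n ≤ (j + 1) * b by lia)
  obtain ⟨a, ha⟩ := Nat.exists_eq_add_of_le (show k ≤ b by lia)
  refine ⟨a, k, ?_, by lia, by lia⟩
  rw [ha] at hk
  simp only [Nat.add_sub_cancel]
  lia

lemma exists_mul_add_pred_mul_eq_of_le {m n : ℕ} (hm : 0 < m) {x : ℝ} (hmx : m ≤ x)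
    (hx : m * x ≤ n) : ∃ a k : ℕ, m * a + (m - 1) * k = n ∧ k ≤ x ∧ x < k + m := by
  have hx0 : 0 ≤ x := m.cast_nonneg.trans hmx
  have hfloor : (m * ⌊x⌋₊ : ℝ) ≤ n :=
    (mul_le_mul_of_nonneg_left (Nat.floor_le hx0) m.cast_nonneg).trans hx
  obtain ⟨a, k, h, hlt, hle⟩ :=
    exists_mul_add_pred_mul_eq hm (Nat.le_floor hmx) (by exact_mod_cast hfloor)
  exact ⟨a, k, h, (Nat.le_floor_iff hx0).mp hle,
    (Nat.lt_floor_add_one x).trans_le (by exact_mod_cast hlt)⟩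

theorem log_permProb_le {m : ℕ} (hm : 0 < m) (n : ℕ) {z : ℝ} (hz : 0 < z) :
    log (permProb n m) ≤ ∑ i ∈ Icc 1 m, z ^ i / (i : ℝ) - n * log z := by
  have hp := permProb_pos n m
  have h := log_le_log (by positivity) (permProb_mul_pow_le_exp hm n hz.le)
  rw [log_exp, log_mul hp.ne' (by positivity), log_pow] at h
  linarith

theorem log_permProb_sub_le {m n : ℕ} (hm : 2 ≤ m) {z : ℝ} (hz : 4 ≤ z) (hzm : z ^ m = n) :
    log (permProb n m) - n / m * (1 - log n) ≤ 4 * (n / m * z⁻¹) := by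
  obtain ⟨k, rfl⟩ : ∃ k, m = k + 2 := ⟨m - 2, by lia⟩
  have hlog : n / ((k + 2 : ℕ) : ℝ) * log n = n * log z := by
    rw [← hzm, log_pow, hzm]
    field_simp
  have hmain := log_permProb_le (m := k + 2) (by lia) n (z := z) (by linarith)
  rw [sum_Icc_succ_top (by lia), hzm] at hmain
  have hpow : z ^ (k + 1) = n * z⁻¹ := by
    rw [← hzm, pow_succ z (k + 1)]
    field_simp
  have hlower : 2 * (z ^ (k + 1) / ((k + 1 : ℕ) : ℝ)) ≤ 4 * (n / ((k + 2 : ℕ) : ℝ) * z⁻¹) := by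
    have hk : (1 : ℝ) / ((k + 1 : ℕ) : ℝ) ≤ 2 / ((k + 2 : ℕ) : ℝ) := by
      rw [div_le_div_iff₀ (by positivity) (by positivity)]
      norm_cast
      lia
    calc 2 * (z ^ (k + 1) / ((k + 1 : ℕ) : ℝ)) = 2 * (n * z⁻¹) * (1 / ((k + 1 : ℕ) : ℝ)) := by
          rw [hpow]; ring
      _ ≤ 2 * (n * z⁻¹) * (2 / ((k + 2 : ℕ) : ℝ)) := by gcongr
      _ = 4 * (n / ((k + 2 : ℕ) : ℝ) * z⁻¹) := by ring
  linarith [sum_Icc_pow_div_le hz k]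

lemma neg_log_permProb_le {m n a k : ℕ} (hm : 2 ≤ m) (h : m * a + (m - 1) * k = n) :
    -log (permProb n m) ≤ (a + k : ℕ) * log m + log a ! + log k ! := by
  have hp := permProb_pos n m
  have hlog := log_le_log one_pos (one_le_permProb_mul_factorial_mul_factorial hm h)
  rw [log_one, log_mul hp.ne' (by positivity), log_mul (by positivity) (by positivity),
    log_mul (by positivity) (by positivity), log_pow] at hlog
  linarith

lemma log_factorial_add_log_factorial_le {a k : ℕ} {n : ℕ} (h : a + k ≤ n) :
    log a ! + log k ! ≤
      (a + k : ℕ) * log (a + k : ℕ) - (a + k : ℕ) - k * (log (a + k : ℕ) - log k) + log n + 2 := by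
  have hlog {i j : ℕ} (hij : i ≤ j) : log i ≤ log j := by
    rcases i.eq_zero_or_pos with rfl | hi
    · simpa using log_natCast_nonneg j
    · gcongr
  have hab : log a ≤ log (a + k : ℕ) := hlog (Nat.le_add_right a k)
  have ha : a * log a ≤ a * log (a + k : ℕ) := mul_le_mul_of_nonneg_left hab a.cast_nonneg
  have han : log a ≤ log n := hlog (by lia)
  have hkn : log k ≤ log n := hlog (by lia)
  have := log_factorial_le a
  have := log_factorial_le k
  push_cast at ha ⊢
  linarith

lemma mul_log_mul_le {n b m k : ℝ} (hn : 0 < n) (hb : 0 ≤ b) (hbn : b ≤ n) (hk : 0 ≤ k)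
    (h : b * m = n + k) : b * log (b * m) ≤ b * log n + k := by
  have hlog : log (b * m) ≤ log n + k / n := by
    rw [h, show n + k = n * (1 + k / n) by field_simp, log_mul hn.ne' (by positivity)]
    linarith [log_le_sub_one_of_pos (show 0 < 1 + k / n by positivity)]
  calc b * log (b * m) ≤ b * (log n + k / n) := by gcongr
    _ = b * log n + b / n * k := by ring
    _ ≤ b * log n + 1 * k := by gcongr; exact (div_le_one hn).mpr hbn
    _ = b * log n + k := by ring

theorem le_log_permProb_sub_of_mul_add_pred_mul_eq {m n a k : ℕ} (hm : 2 ≤ m) (hk : 0 < k)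
    (h : m * a + (m - 1) * k = n) :
    k * (log (n / m / k) - 1 - log n / m) - log n - 2 ≤
      log (permProb n m) - n / m * (1 - log n) := by
  have hm' : (0 : ℝ) < m := by positivity
  have hk' : (0 : ℝ) < k := by positivity
  have hbm : (a + k) * m = n + k := by
    obtain ⟨j, rfl⟩ : ∃ j, m = j + 1 := ⟨m - 1, by lia⟩
    rw [← h, Nat.add_sub_cancel]
    ring
  have hbn : a + k ≤ n := by
    have : (a + k) * 2 ≤ (a + k) * m := Nat.mul_le_mul_left _ hm
    lia
  have hn : (0 : ℝ) < n := by exact_mod_cast hk.trans_le (by lia)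
  have hb : (0 : ℝ) < (a + k : ℕ) := by positivity
  have hbm' : ((a + k : ℕ) : ℝ) * m = n + k := by exact_mod_cast hbm
  have hb_eq : ((a + k : ℕ) : ℝ) = n / m + k / m := by
    rw [← add_div, eq_div_iff hm'.ne', hbm']
  have hratio : log (n / m / k) ≤ log (a + k : ℕ) - log k := by
    rw [← log_div hb.ne' hk'.ne', hb_eq]
    gcongr
    exact le_add_of_nonneg_right (by positivity)
  have hcycles := neg_log_permProb_le hm h
  have hfactorial := log_factorial_add_log_factorial_le hbn
  have hpower := mul_log_mul_le hn hb.le (Nat.cast_le.mpr hbn) hk'.le hbm'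
  rw [log_mul hb.ne' hm'.ne'] at hpower
  calc k * (log (n / m / k) - 1 - log n / m) - log n - 2
      ≤ k * (log (a + k : ℕ) - log k - 1 - log n / m) - log n - 2 + k / m := by
        have : (0 : ℝ) ≤ k / m := by positivity
        have := mul_le_mul_of_nonneg_left hratio hk'.le
        linarith
    _ = k * (log (a + k : ℕ) - log k) - k - log n - 2 + (n / m + k / m)
          - (n / m + k / m) * log n - n / m * (1 - log n) := by ring
    _ ≤ log (permProb n m) - n / m * (1 - log n) := by
        rw [← hb_eq]
        linarith

theorem le_log_permProb_sub {m n : ℕ} (hm : 2 ≤ m) {z : ℝ} (hz : 1 ≤ z) (hzm : z ^ m = n)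
    (hlarge : 2 * (m + log n + 2) ≤ exp (-2) * (n / m * z⁻¹)) :
    exp (-2) / 2 * (n / m * z⁻¹) ≤ log (permProb n m) - n / m * (1 - log n) := by
  set x := exp (-2) * (n / m * z⁻¹) with hx
  have hn0 : (0 : ℝ) < n := hzm ▸ by positivity
  have hlog : 0 ≤ log n := log_natCast_nonneg n
  have hm' : (0 : ℝ) < m := by positivity
  have hmx : m ≤ x := by linarith
  have hxn : m * x ≤ n := by
    calc m * x = exp (-2) * z⁻¹ * n := by rw [hx]; field_simp
      _ ≤ 1 * n := by
        gcongr
        exact mul_le_one₀ (exp_le_one_iff.mpr (by norm_num)) (by positivity)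
          (inv_le_one_of_one_le₀ hz)
      _ = n := one_mul _
  obtain ⟨a, k, h, hkx, hxk⟩ := exists_mul_add_pred_mul_eq_of_le (by lia) hmx hxn
  have hk : (0 : ℝ) < k := by linarith
  have hlog_div : log n / m = log z := by
    rw [← hzm, log_pow]
    field_simp
  have hlog_ratio : 2 + log z ≤ log (n / m / k) := by
    rw [le_log_iff_exp_le (by positivity), exp_add, exp_log (by positivity),
      le_div_iff₀ (by positivity)]
    calc exp 2 * z * k ≤ exp 2 * z * x := by gcongr
      _ = n / m := by rw [hx, exp_neg]; field_simp
  calc exp (-2) / 2 * (n / m * z⁻¹) = x / 2 := by rw [hx]; ring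
    _ ≤ k * 1 - log n - 2 := by linarith
    _ ≤ k * (log (n / m / k) - 1 - log n / m) - log n - 2 := by
        gcongr
        linarith
    _ ≤ log (permProb n m) - n / m * (1 - log n) :=
        le_log_permProb_sub_of_mul_add_pred_mul_eq hm (Nat.cast_pos.mp hk) h

lemma eventually_mul_log_pow_le_sqrt (c : ℝ) (k : ℕ) :
    ∀ᶠ n : ℕ in Filter.atTop, c * log n ^ k ≤ √n := by
  have h := ((isLittleO_log_rpow_rpow_atTop k (show (0 : ℝ) < 1 / 2 by norm_num)).const_mul_left c
    |>.bound one_pos).filter_mono tendsto_natCast_atTop_atTop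
  filter_upwards [h] with n hn
  calc c * log n ^ k ≤ ‖c * log n ^ (k : ℝ)‖ := by
        rw [rpow_natCast]
        exact le_norm_self _
    _ ≤ 1 * ‖(n : ℝ) ^ (1 / 2 : ℝ)‖ := hn
    _ = √n := by rw [one_mul, norm_of_nonneg (by positivity), sqrt_eq_rpow]

lemma four_le_of_pow_eq_of_le_log {m n : ℕ} {z : ℝ} (hz : 0 < z) (hzm : z ^ m = n) (hm : 0 < m)
    (hmn : m ≤ 1 / 2 * log n) : 4 ≤ z := by
  have hlog : 2 ≤ log z := by
    rw [← hzm, log_pow] at hmn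
    have : (0 : ℝ) < m := by positivity
    nlinarith
  calc (4 : ℝ) ≤ exp 1 ^ 2 := by nlinarith [exp_one_gt_two]
    _ = exp 2 := by rw [← exp_nat_mul]; norm_num
    _ ≤ z := (le_log_iff_exp_le hz).mp hlog

lemma two_mul_add_log_add_two_le {m n : ℕ} {z : ℝ} (hz : 1 ≤ z) (hzm : z ^ m = n) (hm : 2 ≤ m)
    (hmn : m ≤ 1 / 2 * log n) (hn : 2 * exp 2 * log n ^ 2 ≤ √n) :
    2 * (m + log n + 2) ≤ exp (-2) * (n / m * z⁻¹) := by
  have hm2 : (2 : ℝ) ≤ m := by exact_mod_cast hm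
  have hz_sqrt : z ≤ √n := by
    refine le_sqrt_of_sq_le ?_
    rw [← hzm]
    exact pow_le_pow_right₀ hz hm
  have hlog : 4 ≤ log n := by linarith
  calc 2 * (m + log n + 2) ≤ 4 * log n := by linarith
    _ = exp (-2) * (2 * exp 2 * log n ^ 2 / (1 / 2 * log n)) := by
        rw [exp_neg]
        field_simp
        norm_num
    _ ≤ exp (-2) * (√n / m) := by gcongr
    _ = exp (-2) * (n / m * (√n)⁻¹) := by
        rw [← div_eq_mul_inv, div_right_comm, div_sqrt]
    _ ≤ exp (-2) * (n / m * z⁻¹) := by gcongr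

/-- There exist constants `c, C, δ > 0` and `N` such that for all `n ≥ N`
and `2 ≤ m ≤ δ·log n`, writing `u = n/m`, one has
`c·u·n^{−1/m} ≤ log p_{n,m} − u·(1 − log n) ≤ C·u·n^{−1/m}`. -/
theorem stmt4 :
    ∃ c C δ : ℝ, 0 < c ∧ 0 < C ∧ 0 < δ ∧ ∃ N : ℕ, ∀ n : ℕ, N ≤ n → ∀ m : ℕ, 2 ≤ m →
      (m : ℝ) ≤ δ * Real.log n → ∀ u : ℝ, u = (n : ℝ) / (m : ℝ) →
      c * u * (n : ℝ) ^ (-(1 : ℝ) / (m : ℝ)) ≤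
          Real.log (permProb n m) - u * (1 - Real.log n) ∧
        Real.log (permProb n m) - u * (1 - Real.log n) ≤
          C * u * (n : ℝ) ^ (-(1 : ℝ) / (m : ℝ)) := by
  obtain ⟨N, hN⟩ := Filter.eventually_atTop.mp
    ((Filter.eventually_gt_atTop 0).and (eventually_mul_log_pow_le_sqrt (2 * exp 2) 2))
  refine ⟨exp (-2) / 2, 4, 1 / 2, by positivity, by norm_num, by norm_num, N, ?_⟩
  rintro n hn m hm hmn u rfl
  obtain ⟨hn_pos, hn_sqrt⟩ := hN n hn
  set z : ℝ := (n : ℝ) ^ (1 / (m : ℝ)) with hz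
  have hzm : z ^ m = n := by
    rw [hz, one_div]
    exact rpow_inv_natCast_pow n.cast_nonneg (by lia)
  have hz4 : 4 ≤ z := four_le_of_pow_eq_of_le_log (by positivity) hzm (by lia) hmn
  have hlarge := two_mul_add_log_add_two_le (by linarith) hzm hm hmn hn_sqrt
  rw [neg_div, rpow_neg n.cast_nonneg, ← hz, mul_assoc, mul_assoc]
  exact ⟨le_log_permProb_sub hm (by linarith) hzm hlarge, log_permProb_sub_le hm hz4 hzm⟩
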